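/- For nonzero spinors κ, ν ∈ ℂ² ∖ {0}, the following are equivalent: (i) {κ, ν} is negative imaginary, i.e. {κ, ν} has zero real part and strictly negative imaginary part; (ii) ν = α·κ + b·Z(κ) for some α ∈ ℂ and some real b > 0. -/

import Mathlib

/-- The spinor inner product `{κ, ν} = ξ₁η₂ − ξ₂η₁`. -/
def spinorInner (κ ν : ℂ × ℂ) : ℂ := κ.1 * ν.2 - ν.1 * κ.2

/-- The map Z(κ) = J·conj(κ) = (i·conj η, −i·conj ξ). -/
def Zmap (κ : ℂ × ℂ) : ℂ × ℂ :=
  (Complex.I * (starRingEnd ℂ) κ.2, -Complex.I * (starRingEnd ℂ) κ.1)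

/-!
Since `{κ, Z(κ)} = -i (|ξ|² + |η|²)` does not vanish, `κ` and `Z(κ)` form a basis of `ℂ²`. Pairing
`ν = α κ + β Z(κ)` with `κ` kills the first term, so `{κ, ν} = -i β (|ξ|² + |η|²)`, which is
negative imaginary exactly when the coefficient `β` is real and positive.
-/

theorem spinorInner_self (κ : ℂ × ℂ) : spinorInner κ κ = 0 :=
  sub_self _

theorem spinorInner_add_right (κ μ ν : ℂ × ℂ) :
    spinorInner κ (μ + ν) = spinorInner κ μ + spinorInner κ ν := by
  simp only [spinorInner, Prod.fst_add, Prod.snd_add]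
  ring

theorem spinorInner_smul_right (κ ν : ℂ × ℂ) (c : ℂ) :
    spinorInner κ (c • ν) = c * spinorInner κ ν := by
  simp only [spinorInner, Prod.smul_fst, Prod.smul_snd, smul_eq_mul]
  ring

/-- Cramer's rule for `ν` in terms of `κ` and `μ`, with denominators cleared. -/
theorem spinorInner_smul_eq_smul_add_smul (κ μ ν : ℂ × ℂ) :
    spinorInner κ μ • ν = spinorInner ν μ • κ + spinorInner κ ν • μ := by
  ext1 <;>
    simp only [spinorInner, Prod.fst_add, Prod.snd_add, Prod.smul_fst, Prod.smul_snd,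
      smul_eq_mul] <;>
    ring

theorem exists_eq_smul_add_smul_iff {κ μ : ℂ × ℂ} (hκμ : spinorInner κ μ ≠ 0)
    (ν : ℂ × ℂ) (β : ℂ) :
    (∃ α : ℂ, ν = α • κ + β • μ) ↔ spinorInner κ ν = β * spinorInner κ μ := by
  constructor
  · rintro ⟨α, rfl⟩
    rw [spinorInner_add_right, spinorInner_smul_right, spinorInner_smul_right, spinorInner_self,
      mul_zero, zero_add]
  · intro hν
    refine ⟨(spinorInner κ μ)⁻¹ * spinorInner ν μ, ?_⟩
    calc ν = (spinorInner κ μ)⁻¹ • spinorInner κ μ • ν := (inv_smul_smul₀ hκμ ν).symm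
      _ = ((spinorInner κ μ)⁻¹ * spinorInner ν μ) • κ + β • μ := by
        rw [spinorInner_smul_eq_smul_add_smul, hν, smul_add, smul_smul, smul_smul, mul_comm β,
          inv_mul_cancel_left₀ hκμ]

/-- The squared Hermitian norm `|ξ|² + |η|²` of a spinor, which computes `{κ, Z(κ)}`. The norm
instance of `ℂ × ℂ` is the sup norm, so it is written out in coordinates. -/
def spinorNormSq (κ : ℂ × ℂ) : ℝ := Complex.normSq κ.1 + Complex.normSq κ.2

theorem spinorNormSq_pos {κ : ℂ × ℂ} (hκ : κ ≠ 0) : 0 < spinorNormSq κ := by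
  rcases not_and_or.1 (mt Prod.ext_iff.2 hκ) with hξ | hη
  · exact add_pos_of_pos_of_nonneg (Complex.normSq_pos.2 hξ) (Complex.normSq_nonneg _)
  · exact add_pos_of_nonneg_of_pos (Complex.normSq_nonneg _) (Complex.normSq_pos.2 hη)

theorem spinorInner_self_Zmap (κ : ℂ × ℂ) :
    spinorInner κ (Zmap κ) = -(spinorNormSq κ * Complex.I) := by
  simp only [spinorInner, Zmap, spinorNormSq, Complex.ofReal_add, Complex.normSq_eq_conj_mul_self]
  ring

theorem spinorInner_self_Zmap_ne_zero {κ : ℂ × ℂ} (hκ : κ ≠ 0) : spinorInner κ (Zmap κ) ≠ 0 := by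
  rw [spinorInner_self_Zmap]
  exact neg_ne_zero.2
    (mul_ne_zero (Complex.ofReal_ne_zero.2 (spinorNormSq_pos hκ).ne') Complex.I_ne_zero)

theorem re_eq_zero_and_im_neg_iff_exists_pos_mul {r : ℝ} (hr : 0 < r) (z : ℂ) :
    (z.re = 0 ∧ z.im < 0) ↔ ∃ b : ℝ, 0 < b ∧ z = b * -(r * Complex.I) := by
  constructor
  · rintro ⟨hre, him⟩
    refine ⟨-z.im / r, div_pos (neg_pos.2 him) hr, Complex.ext ?_ ?_⟩
    · simp [hre]
    · simp [hr.ne']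
  · rintro ⟨b, hb, rfl⟩
    simp [mul_pos hb hr]

/-- For nonzero spinors κ, ν: `{κ, ν}` is negative imaginary (zero real part and strictly
negative imaginary part) if and only if ν = α·κ + b·Z(κ) for some α ∈ ℂ and real b > 0. -/
theorem negative_imaginary_iff (κ ν : ℂ × ℂ) (hκ : κ ≠ 0) (hν : ν ≠ 0) :
    ((spinorInner κ ν).re = 0 ∧ (spinorInner κ ν).im < 0) ↔
      ∃ (α : ℂ) (b : ℝ), 0 < b ∧ ν = α • κ + b • Zmap κ := by
  calc ((spinorInner κ ν).re = 0 ∧ (spinorInner κ ν).im < 0)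
      ↔ ∃ b : ℝ, 0 < b ∧ spinorInner κ ν = b * spinorInner κ (Zmap κ) := by
        rw [spinorInner_self_Zmap]
        exact re_eq_zero_and_im_neg_iff_exists_pos_mul (spinorNormSq_pos hκ) _
    _ ↔ ∃ b : ℝ, 0 < b ∧ ∃ α : ℂ, ν = α • κ + b • Zmap κ := by
        simp only [← exists_eq_smul_add_smul_iff (spinorInner_self_Zmap_ne_zero hκ),
          Complex.coe_smul]
    _ ↔ ∃ (α : ℂ) (b : ℝ), 0 < b ∧ ν = α • κ + b • Zmap κ := by
        simp only [← exists_and_left]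
        exact exists_comm
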